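/- Let Φ ∈ ℝ^{m×n} have restricted isometry constant δ_K < 1 of order K, let x ∈ ℝ^n be K-sparse with support T, |T| = K, and let y = Φx + v. Suppose that after k iterations (1 ≤ k < K) a run of OMP has selected only correct indices, i.e., T^k ⊆ T with |T^k| = k. Then u := max_{i ∈ T\T^k} |⟨φ_i, r^k⟩| satisfies u ≥ (1/√(K−k)) · ((1 − δ_K)‖x_{T\T^k}‖₂ − √(1 + δ_K)·‖v‖₂), where x_{T\T^k} denotes the restriction of x to the indices in T\T^k. -/

import Mathlib

noncomputable section
open Finset

/-- `Vec n` is `ℝ^n` with the Euclidean (ℓ²) norm. -/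
abbrev Vec (n : ℕ) := EuclideanSpace ℝ (Fin n)

/-- The standard inner product `⟨u, v⟩ = ∑ i, u i * v i`. -/
def dot {n : ℕ} (u v : Vec n) : ℝ := ∑ i, u i * v i

/-- The `j`-th column of a matrix, as a Euclidean vector. -/
def col {m n : ℕ} (Φ : Matrix (Fin m) (Fin n) ℝ) (j : Fin n) : Vec m :=
  WithLp.toLp 2 fun i => Φ i j

/-- Matrix-vector multiplication `Φ x`, valued in Euclidean space. -/
def mulVec' {m n : ℕ} (Φ : Matrix (Fin m) (Fin n) ℝ) (x : Vec n) : Vec m :=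
  WithLp.toLp 2 fun i => ∑ j, Φ i j * x j

/-- The support of a vector, as a `Finset`. -/
def suppF {n : ℕ} (x : Vec n) : Finset (Fin n) :=
  Finset.univ.filter fun i => x i ≠ 0

/-- Restriction of a vector to an index set (zero outside the set). -/
def restrict {n : ℕ} (x : Vec n) (S : Finset (Fin n)) : Vec n :=
  WithLp.toLp 2 fun i => if i ∈ S then x i else 0

/-- `RIPConst Φ L δ` : δ is the restricted isometry constant of `Φ` of order `L`,
i.e. the smallest `c ≥ 0` such that `(1-c)‖u‖² ≤ ‖Φu‖² ≤ (1+c)‖u‖²` for all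
`L`-sparse `u`. -/
def RIPConst {m n : ℕ} (Φ : Matrix (Fin m) (Fin n) ℝ) (L : ℕ) (δ : ℝ) : Prop :=
  IsLeast {c : ℝ | 0 ≤ c ∧ ∀ u : Vec n, (suppF u).card ≤ L →
    (1 - c) * ‖u‖ ^ 2 ≤ ‖mulVec' Φ u‖ ^ 2 ∧ ‖mulVec' Φ u‖ ^ 2 ≤ (1 + c) * ‖u‖ ^ 2} δ

/-- Signal-to-noise ratio `‖Φx‖²/‖v‖²`. -/
def SNR {m n : ℕ} (Φ : Matrix (Fin m) (Fin n) ℝ) (x : Vec n) (v : Vec m) : ℝ :=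
  ‖mulVec' Φ x‖ ^ 2 / ‖v‖ ^ 2

/-- A run of `N` iterations of Orthogonal Matching Pursuit on data `(Φ, y)`:
`idx (k+1) = t^{k+1}` is the index selected at iteration `k+1`, `sets k = T^k`,
`est k = x^k` and `res k = r^k`. -/
structure OMPRun {m n : ℕ} (Φ : Matrix (Fin m) (Fin n) ℝ) (y : Vec m) (N : ℕ) where
  idx : ℕ → Fin n
  sets : ℕ → Finset (Fin n)
  est : ℕ → Vec n
  res : ℕ → Vec m
  sets_zero : sets 0 = ∅
  est_zero : est 0 = 0
  res_zero : res 0 = y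
  idx_not_mem : ∀ k < N, idx (k + 1) ∉ sets k
  idx_max : ∀ k < N, ∀ i : Fin n, i ∉ sets k →
    |dot (col Φ i) (res k)| ≤ |dot (col Φ (idx (k + 1))) (res k)|
  sets_succ : ∀ k < N, sets (k + 1) = insert (idx (k + 1)) (sets k)
  est_supp : ∀ k < N, suppF (est (k + 1)) ⊆ sets (k + 1)
  est_min : ∀ k < N, ∀ u : Vec n, suppF u ⊆ sets (k + 1) →
    ‖y - mulVec' Φ (est (k + 1))‖ ≤ ‖y - mulVec' Φ u‖
  res_succ : ∀ k < N, res (k + 1) = y - mulVec' Φ (est (k + 1))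

/-- The vector `Φᵀ w` restricted to an index set `A` (the vector of correlations
`⟨φ_i, w⟩` for `i ∈ A`, zero outside `A`), as a Euclidean vector. -/
def colDots {m n : ℕ} (Φ : Matrix (Fin m) (Fin n) ℝ) (A : Finset (Fin n)) (w : Vec m) : Vec n :=
  WithLp.toLp 2 fun i => if i ∈ A then dot (col Φ i) w else 0

/-- The vector `Φᵀ w` of all column correlations, as a plain function (so `‖·‖`
is the sup/ℓ∞ norm). -/
def dualVec {m n : ℕ} (Φ : Matrix (Fin m) (Fin n) ℝ) (w : Vec m) : Fin n → ℝ :=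
  fun i => dot (col Φ i) w

/-- `P⊥_S w` : the projection of `w` onto the orthogonal complement of the span
of the columns of `Φ` indexed by `S`. -/
def perpProj {m n : ℕ} (Φ : Matrix (Fin m) (Fin n) ℝ) (S : Finset (Fin n)) (w : Vec m) : Vec m :=
  w - (Submodule.orthogonalProjectionOnto (Submodule.span ℝ (col Φ '' (S : Set (Fin n)))) w : Vec m)

/-- The `j`-th largest value (1-indexed) among `{|x i| : i ∈ Γ}` (with
multiplicities); `0` if `j > |Γ|` or `j = 0`. -/
def kthLargest {n : ℕ} (x : Vec n) (Γ : Finset (Fin n)) (j : ℕ) : ℝ :=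
  if 1 ≤ j ∧ j ≤ Γ.card then
    (Multiset.sort (Γ.val.map fun i => |x i|) (· ≤ ·)).getD (Γ.card - j) 0
  else 0


lemma le_of_sq_le_sq_aux {a b : ℝ} (h : a ^ 2 ≤ b ^ 2) (hb : 0 ≤ b) : a ≤ b :=
  le_trans (le_abs_self a) (abs_le_of_sq_le_sq h hb)

lemma dot_eq_inner {n : ℕ} (u v : Vec n) : dot u v = inner ℝ u v := by
  simp [dot, PiLp.inner_apply, mul_comm]

lemma mulVec'_eq_sum {m n : ℕ} (Φ : Matrix (Fin m) (Fin n) ℝ) (z : Vec n) :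
    mulVec' Φ z = ∑ j, z j • col Φ j := by
  ext i
  simp [mulVec', col, mul_comm]

lemma mulVec'_sub {m n : ℕ} (Φ : Matrix (Fin m) (Fin n) ℝ) (z w : Vec n) :
    mulVec' Φ (z - w) = mulVec' Φ z - mulVec' Φ w := by
  simp [mulVec'_eq_sum, sub_smul]

lemma mulVec'_add_single {m n : ℕ} (Φ : Matrix (Fin m) (Fin n) ℝ) (z : Vec n) (j : Fin n)
    (t : ℝ) : mulVec' Φ (z + EuclideanSpace.single j t) = mulVec' Φ z + t • col Φ j := by
  simp [mulVec'_eq_sum, add_smul, Finset.sum_add_distrib, ite_smul]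

lemma inner_mulVec' {m n : ℕ} (Φ : Matrix (Fin m) (Fin n) ℝ) (z : Vec n) (r : Vec m) :
    inner ℝ (mulVec' Φ z) r = ∑ j, z j * dot (col Φ j) r := by
  simp [mulVec'_eq_sum, sum_inner, inner_smul_left, dot_eq_inner]

lemma inner_zero_of_min {m : ℕ} (p r : Vec m) (h : ∀ t : ℝ, ‖r‖ ≤ ‖r - t • p‖) :
    inner ℝ p r = 0 := by
  set d : ℝ := inner ℝ p r with hd
  have hc : 0 < ‖p‖ ^ 2 + 1 := by positivity
  have h1 := h (d / (‖p‖ ^ 2 + 1))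
  have h2 : ‖r‖ ^ 2 ≤ ‖r - (d / (‖p‖ ^ 2 + 1)) • p‖ ^ 2 := by gcongr
  rw [norm_sub_sq_real, inner_smul_right, real_inner_comm, ← hd, norm_smul, mul_pow,
    Real.norm_eq_abs, sq_abs] at h2
  set c := ‖p‖ ^ 2 with hcdef
  set t := d / (c + 1) with ht
  have hdt : d = t * (c + 1) := by rw [ht]; field_simp
  have hc0 : 0 ≤ c := by positivity
  have : t ^ 2 = 0 := by
    rw [hdt] at h2
    nlinarith [sq_nonneg t, mul_nonneg (sq_nonneg t) hc0]
  have : t = 0 := by simpa using this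
  rw [hdt, this, zero_mul]

/-- lower bound on `u = max_{i ∈ T\T^k} |⟨φ_i, r^k⟩|` when the
first `k` iterations of OMP selected only correct indices. -/
theorem stmt5 {m n K k : ℕ} (Φ : Matrix (Fin m) (Fin n) ℝ) (δ : ℝ)
    (x : Vec n) (v y : Vec m) (T : Finset (Fin n))
    (hsupp : suppF x = T) (hcard : T.card = K)
    (hRIP : RIPConst Φ K δ) (hδ : δ < 1)
    (hy : y = mulVec' Φ x + v)
    (hk1 : 1 ≤ k) (hkK : k < K)
    (run : OMPRun Φ y k)
    (hsub : run.sets k ⊆ T) (hcardk : (run.sets k).card = k) :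
    ∃ i ∈ T \ run.sets k,
      (1 / Real.sqrt ((K : ℝ) - k)) *
          ((1 - δ) * ‖restrict x (T \ run.sets k)‖ - Real.sqrt (1 + δ) * ‖v‖)
        ≤ |dot (col Φ i) (run.res k)| := by
  classical
  obtain ⟨⟨hδ0, hR⟩, -⟩ := hRIP
  obtain ⟨l, rfl⟩ : ∃ l, k = l + 1 := ⟨k - 1, by omega⟩
  have hres := run.res_succ l (by omega)
  have hes := run.est_supp l (by omega)
  have hmin := run.est_min l (by omega)
  set S := run.sets (l + 1) with hS
  set e := run.est (l + 1) with he
  set r := run.res (l + 1) with hr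
  have he0 : ∀ i, i ∉ S → e i = 0 := by
    intro i hi
    by_contra hne
    exact hi (hes (by simp [suppF, hne]))
  have hx0 : ∀ i, i ∉ T → x i = 0 := by
    intro i hi
    by_contra hne
    exact hi (hsupp ▸ (by simp [suppF, hne]))
  have horth : ∀ j ∈ S, dot (col Φ j) r = 0 := by
    intro j hj
    rw [dot_eq_inner]
    apply inner_zero_of_min
    intro t
    have h := hmin (e + EuclideanSpace.single j t) (by
      intro i hi
      by_contra hiS
      have hij : i ≠ j := fun h => hiS (h ▸ hj)
      simp [suppF, he0 i hiS, hij] at hi)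
    rw [mulVec'_add_single, ← sub_sub, ← hres] at h
    exact h
  set z : Vec n := x - e with hz
  have hzr : r = mulVec' Φ z + v := by
    rw [hres, hy, hz, mulVec'_sub]; abel
  set A := T \ S with hA
  have hAcard : (A.card : ℝ) = (K : ℝ) - ((l + 1 : ℕ) : ℝ) := by
    rw [hA, Finset.cast_card_sdiff hsub, hcard, hcardk]
  have hApos : 0 < (A.card : ℝ) := by
    rw [hAcard]; have : ((l + 1 : ℕ) : ℝ) < K := by exact_mod_cast hkK
    linarith
  have hAne : A.Nonempty := by
    rw [← Finset.card_pos]; exact_mod_cast hApos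
  obtain ⟨i, hiA, himax⟩ := A.exists_max_image (fun i => |dot (col Φ i) r|) hAne
  refine ⟨i, hiA, ?_⟩
  rw [← hAcard]
  set U := |dot (col Φ i) r| with hU
  have hU0 : 0 ≤ U := abs_nonneg _
  set s := ‖restrict x A‖ with hs
  have hs0 : 0 ≤ s := norm_nonneg _
  have hssq : s ^ 2 = ∑ j ∈ A, x j ^ 2 := by
    rw [hs, EuclideanSpace.real_norm_sq_eq]
    simp [_root_.restrict, ite_pow, Finset.sum_ite_mem]
  have hzA : ∀ j ∈ A, z j = x j := by
    intro j hj
    have : j ∉ S := (Finset.mem_sdiff.mp hj).2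
    simp [hz, he0 j this]
  have hsz : s ≤ ‖z‖ := by
    refine le_of_sq_le_sq_aux ?_ (norm_nonneg _)
    rw [hssq, EuclideanSpace.real_norm_sq_eq,
      Finset.sum_congr rfl (fun j hj => by rw [← hzA j hj] : ∀ j ∈ A, x j ^ 2 = z j ^ 2)]
    exact Finset.sum_le_sum_of_subset_of_nonneg (Finset.subset_univ _) (fun _ _ _ => sq_nonneg _)
  have hzT : suppF z ⊆ T := by
    intro j hj
    by_contra hjT
    have : j ∉ S := fun h => hjT (hsub h)
    simp [suppF, hz, hx0 j hjT, he0 j this] at hj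
  obtain ⟨hlo, hhi⟩ := hR z (by rw [← hcard]; exact Finset.card_le_card hzT)
  have hin : inner ℝ (mulVec' Φ z) r = ∑ j ∈ A, x j * dot (col Φ j) r := by
    rw [inner_mulVec', ← Finset.sum_subset (Finset.subset_univ A)]
    · exact Finset.sum_congr rfl (fun j hj => by rw [hzA j hj])
    · intro j _ hj
      by_cases hjS : j ∈ S
      · rw [horth j hjS, mul_zero]
      · have hjT : j ∉ T := fun h => hj (Finset.mem_sdiff.mpr ⟨h, hjS⟩)
        simp [hz, hx0 j hjT, he0 j hjS]
  have hup : inner ℝ (mulVec' Φ z) r ≤ (√(A.card : ℝ) * s) * U := by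
    have h1 : ∑ j ∈ A, x j * dot (col Φ j) r ≤ (∑ j ∈ A, |x j|) * U := by
      rw [Finset.sum_mul]
      apply Finset.sum_le_sum
      intro j hj
      calc x j * dot (col Φ j) r ≤ |x j * dot (col Φ j) r| := le_abs_self _
        _ = |x j| * |dot (col Φ j) r| := abs_mul _ _
        _ ≤ |x j| * U := mul_le_mul_of_nonneg_left (himax j hj) (abs_nonneg _)
    have h2 : ∑ j ∈ A, |x j| ≤ √(A.card : ℝ) * s := by
      refine le_of_sq_le_sq_aux ?_ (by positivity)
      rw [mul_pow, Real.sq_sqrt hApos.le, hssq]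
      have := sq_sum_le_card_mul_sum_sq (s := A) (f := fun j => |x j|)
      simpa using this
    rw [hin]
    exact h1.trans (mul_le_mul_of_nonneg_right h2 hU0)
  set a := ‖mulVec' Φ z‖ with ha
  have hain : inner ℝ (mulVec' Φ z) r ≥ a ^ 2 - a * ‖v‖ := by
    rw [hzr, inner_add_right, real_inner_self_eq_norm_sq]
    have := abs_le.mp (abs_real_inner_le_norm (mulVec' Φ z) v)
    linarith [this.1]
  have haz : a ≤ √(1 + δ) * ‖z‖ := by
    refine le_of_sq_le_sq_aux ?_ (by positivity)
    rw [mul_pow, Real.sq_sqrt (by linarith)]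
    exact hhi
  set q := √(1 + δ) with hq
  set B := (1 - δ) * s - q * ‖v‖ with hB
  have hsq : 0 < √(A.card : ℝ) := Real.sqrt_pos.mpr hApos
  rw [one_div, inv_mul_le_iff₀ hsq]
  rcases le_or_gt B 0 with hB0 | hB0
  · exact hB0.trans (by positivity)
  have hqv : 0 ≤ q * ‖v‖ := by positivity
  have hspos : 0 < s := by
    rcases hs0.eq_or_lt with h | h
    · rw [hB, ← h] at hB0; linarith
    · exact h
  have hBz : B ≤ (1 - δ) * ‖z‖ - q * ‖v‖ := by
    have := mul_le_mul_of_nonneg_left hsz (by linarith : 0 ≤ 1 - δ)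
    linarith
  have h3 : s * B ≤ ‖z‖ * ((1 - δ) * ‖z‖ - q * ‖v‖) :=
    mul_le_mul hsz hBz hB0.le (norm_nonneg _)
  have h4 : a * ‖v‖ ≤ q * ‖z‖ * ‖v‖ := mul_le_mul_of_nonneg_right haz (norm_nonneg _)
  have h5 : s * B ≤ s * (√(A.card : ℝ) * U) := by nlinarith
  exact le_of_mul_le_mul_left h5 hspos

end
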